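/- arXiv:1710.10603 — 3 statements merged into one kernel-verified Lean document; each statement's English description precedes it below -/
import Mathlib

section
/- Let Φ be a measurable function on ℝ^n and A(y) a measurable n×n-matrix-valued function with A(y) invertible for a.e. y in the support of Φ, satisfying ∫_{ℝ^n} |det A(y)|^{-1} (1 + ‖A(y)‖) |Φ(y)| dy < ∞. Then for every f ∈ W^{1,1}(ℝ^n), the weak gradient of H_{Φ,A} f is given for a.e. x by ∇(H_{Φ,A} f)(x) = ∫_{ℝ^n} Φ(y) ∇f(A(y)x) · A(y) dy, where ∇f is the row vector of first-order weak partial derivatives of f. -/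
open MeasureTheory

noncomputable section

/-- Action of an `n × n` matrix on a vector of `ℝⁿ` (Euclidean space). -/
def matVec {n : ℕ} (M : Matrix (Fin n) (Fin n) ℝ) (x : EuclideanSpace ℝ (Fin n)) :
    EuclideanSpace ℝ (Fin n) :=
  (WithLp.equiv 2 (Fin n → ℝ)).symm (M.mulVec (WithLp.equiv 2 (Fin n → ℝ) x))

/-- Hilbert–Schmidt (Frobenius) norm of a matrix. -/
def frobNorm {n : ℕ} (M : Matrix (Fin n) (Fin n) ℝ) : ℝ :=
  Real.sqrt (∑ i, ∑ j, (M i j) ^ 2)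

/-- Classical partial derivative `∂/∂xᵢ`. -/
def pderiv1 {n : ℕ} (i : Fin n) (f : EuclideanSpace ℝ (Fin n) → ℝ) :
    EuclideanSpace ℝ (Fin n) → ℝ :=
  fun x => fderiv ℝ f x (EuclideanSpace.single i 1)

/-- Classical multi-index derivative `D^α = ∂^{α₁}_{x₁} ⋯ ∂^{αₙ}_{xₙ}`. -/
def mderiv {n : ℕ} (α : Fin n → ℕ) (f : EuclideanSpace ℝ (Fin n) → ℝ) :
    EuclideanSpace ℝ (Fin n) → ℝ :=
  (List.finRange n).foldr (fun i g => (pderiv1 i)^[α i] g) f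

/-- `g` is the weak derivative of order `α` of `f`:
`∫ f · D^α φ = (−1)^{|α|} ∫ g · φ` for all test functions `φ ∈ C_c^∞`. -/
def IsWeakDeriv {n : ℕ} (α : Fin n → ℕ) (f g : EuclideanSpace ℝ (Fin n) → ℝ) : Prop :=
  ∀ φ : EuclideanSpace ℝ (Fin n) → ℝ, ContDiff ℝ (⊤ : ℕ∞) φ → HasCompactSupport φ →
    ∫ x, f x * mderiv α φ x = (-1 : ℝ) ^ (∑ i, α i) * ∫ x, g x * φ x

/-- `D` is a family of integrable weak derivatives of `f` for all multi-indices `|α| ≤ k`;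
this expresses `f ∈ W^{k,1}(ℝⁿ)` together with a choice of its weak derivatives. -/
def HasSobolevDerivs {n : ℕ} (k : ℕ) (f : EuclideanSpace ℝ (Fin n) → ℝ)
    (D : (Fin n → ℕ) → EuclideanSpace ℝ (Fin n) → ℝ) : Prop :=
  D 0 = f ∧ ∀ α : Fin n → ℕ, (∑ i, α i) ≤ k → Integrable (D α) ∧ IsWeakDeriv α f (D α)

/-- The Sobolev norm `‖f‖_{W^{k,1}} = Σ_{|α| ≤ k} ‖D^α f‖_{L¹}`, computed from a family `D`
of weak derivatives. -/
def sobolevNorm {n : ℕ} (k : ℕ) (D : (Fin n → ℕ) → EuclideanSpace ℝ (Fin n) → ℝ) : ℝ :=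
  ∑ α ∈ (Fintype.piFinset fun _ : Fin n => Finset.range (k + 1)).filter
      (fun α => ∑ i, α i ≤ k), ∫ x, |D α x|

/-- The generalized Hausdorff operator `H_{Φ,A} f (x) = ∫ Φ(y) f(A(y)x) dy`. -/
def hausdorffOp {n : ℕ} (Φ : EuclideanSpace ℝ (Fin n) → ℝ)
    (A : EuclideanSpace ℝ (Fin n) → Matrix (Fin n) (Fin n) ℝ)
    (f : EuclideanSpace ℝ (Fin n) → ℝ) : EuclideanSpace ℝ (Fin n) → ℝ :=
  fun x => ∫ y, Φ y * f (matVec (A y) x)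

section Helpers

variable {n : ℕ}

lemma matVec_eq_toLpLin (M : Matrix (Fin n) (Fin n) ℝ) (x : EuclideanSpace ℝ (Fin n)) :
    matVec M x = Matrix.toLpLin 2 2 M x := rfl

lemma matVec_apply (M : Matrix (Fin n) (Fin n) ℝ) (x : EuclideanSpace ℝ (Fin n)) (i : Fin n) :
    matVec M x i = ∑ k, M i k * x k := rfl

lemma matVec_matVec (M N : Matrix (Fin n) (Fin n) ℝ) (x : EuclideanSpace ℝ (Fin n)) :
    matVec M (matVec N x) = matVec (M * N) x := by
  simp [matVec, Matrix.mulVec_mulVec]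

lemma matVec_one (x : EuclideanSpace ℝ (Fin n)) : matVec 1 x = x := by
  simp [matVec]

lemma measurable_matVec (M : Matrix (Fin n) (Fin n) ℝ) : Measurable (matVec M) :=
  (LinearMap.continuous_of_finiteDimensional (Matrix.toLpLin 2 2 M)).measurable

lemma map_matVec (M : Matrix (Fin n) (Fin n) ℝ) (hM : M.det ≠ 0) :
    Measure.map (matVec M) (volume : Measure (EuclideanSpace ℝ (Fin n)))
      = ENNReal.ofReal |M.det|⁻¹ • volume := by
  have h := Measure.map_linearMap_addHaar_eq_smul_addHaar
    (volume : Measure (EuclideanSpace ℝ (Fin n))) (f := Matrix.toLpLin 2 2 M)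
    (by rwa [LinearMap.det_toLpLin])
  rw [LinearMap.det_toLpLin, abs_inv] at h
  exact h

lemma aesm_map {M : Matrix (Fin n) (Fin n) ℝ} (hM : M.det ≠ 0)
    {h : EuclideanSpace ℝ (Fin n) → ℝ} (hh : AEStronglyMeasurable h volume) :
    AEStronglyMeasurable h (Measure.map (matVec M) volume) := by
  rw [map_matVec M hM]
  exact hh.smul_measure _

lemma integral_matVec {M : Matrix (Fin n) (Fin n) ℝ} (hM : M.det ≠ 0)
    {h : EuclideanSpace ℝ (Fin n) → ℝ} (hh : AEStronglyMeasurable h volume) :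
    ∫ x, h (matVec M x) = |M.det|⁻¹ * ∫ x, h x := by
  rw [← integral_map (measurable_matVec M).aemeasurable (aesm_map hM hh), map_matVec M hM,
    integral_smul_measure, ENNReal.toReal_ofReal (by positivity), smul_eq_mul]

lemma integrable_matVec {M : Matrix (Fin n) (Fin n) ℝ} (hM : M.det ≠ 0)
    {h : EuclideanSpace ℝ (Fin n) → ℝ} (hh : Integrable h) :
    Integrable (fun x => h (matVec M x)) := by
  have := (integrable_map_measure (aesm_map hM hh.1) (measurable_matVec M).aemeasurable).1
    (by rw [map_matVec M hM]; exact hh.smul_measure ENNReal.ofReal_ne_top)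
  exact this

lemma foldr_single (j : Fin n) (φ : EuclideanSpace ℝ (Fin n) → ℝ) (l : List (Fin n))
    (hl : l.Nodup) :
    l.foldr (fun i g => (pderiv1 i)^[(Pi.single j 1 : Fin n → ℕ) i] g) φ
      = if j ∈ l then pderiv1 j φ else φ := by
  induction l with
  | nil => simp
  | cons a l ih =>
    rw [List.nodup_cons] at hl
    rw [List.foldr_cons, ih hl.2]
    by_cases haj : a = j
    · subst haj
      simp [hl.1]
    · have : j ≠ a := fun h => haj h.symm
      simp [Pi.single_apply, haj, this]

lemma mderiv_single (j : Fin n) (φ : EuclideanSpace ℝ (Fin n) → ℝ) :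
    mderiv (Pi.single j 1) φ = pderiv1 j φ := by
  rw [mderiv, foldr_single j φ _ (List.nodup_finRange n)]
  simp

lemma isWeakDeriv_single (j : Fin n) (f g : EuclideanSpace ℝ (Fin n) → ℝ) :
    IsWeakDeriv (Pi.single j 1) f g ↔
      ∀ φ : EuclideanSpace ℝ (Fin n) → ℝ, ContDiff ℝ (⊤ : ℕ∞) φ → HasCompactSupport φ →
        ∫ x, f x * pderiv1 j φ x = - ∫ x, g x * φ x := by
  unfold IsWeakDeriv
  simp [mderiv_single]

lemma continuous_pderiv1 {φ : EuclideanSpace ℝ (Fin n) → ℝ} (hφ : ContDiff ℝ (⊤ : ℕ∞) φ)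
    (j : Fin n) : Continuous (pderiv1 j φ) :=
  (hφ.continuous_fderiv (by simp)).clm_apply continuous_const

lemma hasCompactSupport_pderiv1 {φ : EuclideanSpace ℝ (Fin n) → ℝ} (hφ : HasCompactSupport φ)
    (j : Fin n) : HasCompactSupport (pderiv1 j φ) :=
  hφ.fderiv_apply ℝ _

lemma matVec_single (M : Matrix (Fin n) (Fin n) ℝ) (j : Fin n) :
    matVec M (EuclideanSpace.single j 1) = ∑ i, M i j • EuclideanSpace.single i (1 : ℝ) := by
  ext i
  rw [matVec_apply]
  simp [Finset.sum_apply, Pi.single_apply]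

/-- chain rule -/
lemma pderiv1_comp (M : Matrix (Fin n) (Fin n) ℝ) {ψ : EuclideanSpace ℝ (Fin n) → ℝ}
    (hψ : Differentiable ℝ ψ) (j : Fin n) (x : EuclideanSpace ℝ (Fin n)) :
    pderiv1 j (fun x => ψ (matVec M x)) x = ∑ i, pderiv1 i ψ (matVec M x) * M i j := by
  let L : EuclideanSpace ℝ (Fin n) →L[ℝ] EuclideanSpace ℝ (Fin n) :=
    LinearMap.toContinuousLinearMap (Matrix.toLpLin 2 2 M)
  have h1 : HasFDerivAt (fun x => ψ (L x)) ((fderiv ℝ ψ (L x)).comp L) x :=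
    (hψ (L x)).hasFDerivAt.comp x L.hasFDerivAt
  have h2 : fderiv ℝ (fun x => ψ (matVec M x)) x = (fderiv ℝ ψ (L x)).comp L := h1.fderiv
  unfold pderiv1
  rw [h2]
  have h3 : L (EuclideanSpace.single j 1) = ∑ i, M i j • EuclideanSpace.single i (1 : ℝ) :=
    matVec_single M j
  rw [ContinuousLinearMap.comp_apply, h3, map_sum]
  refine Finset.sum_congr rfl fun i _ => ?_
  rw [map_smul, smul_eq_mul, mul_comm]
  rfl

lemma contDiff_matVec (M : Matrix (Fin n) (Fin n) ℝ) : ContDiff ℝ (⊤ : ℕ∞) (matVec M) :=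
  (LinearMap.toContinuousLinearMap (Matrix.toLpLin 2 2 M)).contDiff

lemma integrable_mul_cc {h φ : EuclideanSpace ℝ (Fin n) → ℝ} (hh : Integrable h)
    (hc : Continuous φ) (hs : HasCompactSupport φ) : Integrable (fun x => h x * φ x) := by
  obtain ⟨C, hC⟩ := hs.exists_bound_of_continuous hc
  exact hh.mul_bdd hc.aestronglyMeasurable (Filter.Eventually.of_forall hC)

/-- The result for one fixed invertible matrix. -/
lemma weak_one_matrix {M : Matrix (Fin n) (Fin n) ℝ} (hM : M.det ≠ 0)
    {f : EuclideanSpace ℝ (Fin n) → ℝ} {g : Fin n → EuclideanSpace ℝ (Fin n) → ℝ}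
    (hf : Integrable f)
    (hg : ∀ i, Integrable (g i) ∧ IsWeakDeriv (Pi.single i 1) f (g i))
    {φ : EuclideanSpace ℝ (Fin n) → ℝ} (hφ : ContDiff ℝ (⊤ : ℕ∞) φ) (hs : HasCompactSupport φ)
    (j : Fin n) :
    ∫ x, f (matVec M x) * pderiv1 j φ x = - ∫ x, (∑ i, g i (matVec M x) * M i j) * φ x := by
  have hu : IsUnit M.det := isUnit_iff_ne_zero.2 hM
  let ψ : EuclideanSpace ℝ (Fin n) → ℝ := fun z => φ (matVec M⁻¹ z)
  have hψ : ContDiff ℝ (⊤ : ℕ∞) ψ := hφ.comp (contDiff_matVec _)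
  have hinv1 : ∀ x, matVec M⁻¹ (matVec M x) = x := fun x => by
    rw [matVec_matVec, Matrix.nonsing_inv_mul _ hu, matVec_one]
  have hinv2 : ∀ x, matVec M (matVec M⁻¹ x) = x := fun x => by
    rw [matVec_matVec, Matrix.mul_nonsing_inv _ hu, matVec_one]
  have hψs : HasCompactSupport ψ := by
    let e : EuclideanSpace ℝ (Fin n) ≃ₜ EuclideanSpace ℝ (Fin n) :=
      { toFun := matVec M⁻¹
        invFun := matVec M
        left_inv := hinv2
        right_inv := hinv1
        continuous_toFun := (contDiff_matVec _).continuous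
        continuous_invFun := (contDiff_matVec _).continuous }
    exact hs.comp_homeomorph e
  have hφψ : φ = fun x => ψ (matVec M x) := by
    funext x
    simp only [ψ, hinv1]
  have hd : ∀ x, pderiv1 j φ x = ∑ i, pderiv1 i ψ (matVec M x) * M i j := fun x => by
    conv_lhs => rw [hφψ]
    exact pderiv1_comp M (hψ.differentiable (by simp)) j x
  have hI1 : ∀ i, Integrable (fun z => f z * pderiv1 i ψ z) := fun i =>
    integrable_mul_cc hf (continuous_pderiv1 hψ i) (hasCompactSupport_pderiv1 hψs i)
  have hI2 : ∀ i, Integrable (fun z => g i z * ψ z) := fun i =>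
    integrable_mul_cc (hg i).1 hψ.continuous hψs
  have hL : ∀ x, f (matVec M x) * pderiv1 j φ x =
      ∑ i, M i j * (f (matVec M x) * pderiv1 i ψ (matVec M x)) := fun x => by
    rw [hd, Finset.mul_sum]
    exact Finset.sum_congr rfl fun i _ => by ring
  have hR : ∀ x, (∑ i, g i (matVec M x) * M i j) * φ x =
      ∑ i, M i j * (g i (matVec M x) * ψ (matVec M x)) := fun x => by
    rw [Finset.sum_mul]
    refine Finset.sum_congr rfl fun i _ => ?_
    rw [show φ x = ψ (matVec M x) from congrFun hφψ x]
    ring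
  simp_rw [hL, hR]
  rw [integral_finsetSum _ fun i _ => (integrable_matVec hM (hI1 i)).const_mul _,
    integral_finsetSum _ fun i _ => (integrable_matVec hM (hI2 i)).const_mul _,
    ← Finset.sum_neg_distrib]
  refine Finset.sum_congr rfl fun i _ => ?_
  rw [integral_const_mul, integral_const_mul,
    integral_matVec hM (hI1 i).1, integral_matVec hM (hI2 i).1,
    (isWeakDeriv_single i f (g i)).1 (hg i).2 ψ hψ hψs]
  ring

lemma measurable_matVec_joint {A : EuclideanSpace ℝ (Fin n) → Matrix (Fin n) (Fin n) ℝ}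
    (hA : ∀ i j, Measurable fun y => A y i j) :
    Measurable (fun p : EuclideanSpace ℝ (Fin n) × EuclideanSpace ℝ (Fin n) =>
      matVec (A p.1) p.2) := by
  have h : Measurable (fun p : EuclideanSpace ℝ (Fin n) × EuclideanSpace ℝ (Fin n) =>
      fun i => ∑ k, A p.1 i k * p.2 k) := by
    refine measurable_pi_lambda _ fun i => Finset.measurable_sum _ fun k _ => ?_
    exact ((hA i k).comp measurable_fst).mul
      ((measurable_pi_apply k).comp ((WithLp.measurable_ofLp 2 (Fin n → ℝ)).comp measurable_snd))
  exact (WithLp.measurable_toLp 2 (Fin n → ℝ)).comp h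

lemma measurable_det {A : EuclideanSpace ℝ (Fin n) → Matrix (Fin n) (Fin n) ℝ}
    (hA : ∀ i j, Measurable fun y => A y i j) : Measurable (fun y => (A y).det) := by
  simp_rw [Matrix.det_apply]
  refine Finset.measurable_sum _ fun σ _ => ?_
  exact (Finset.measurable_prod _ fun i _ => hA _ _).const_smul _

lemma aesm_joint {A : EuclideanSpace ℝ (Fin n) → Matrix (Fin n) (Fin n) ℝ}
    (hA : ∀ i j, Measurable fun y => A y i j)
    {w : EuclideanSpace ℝ (Fin n) → ℝ} (hw : Measurable w)
    (hinv : ∀ᵐ y : EuclideanSpace ℝ (Fin n), w y ≠ 0 → (A y).det ≠ 0)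
    {h : EuclideanSpace ℝ (Fin n) → ℝ} (hh : AEStronglyMeasurable h volume) :
    AEStronglyMeasurable (fun p : EuclideanSpace ℝ (Fin n) × EuclideanSpace ℝ (Fin n) =>
      w p.1 * h (matVec (A p.1) p.2)) (volume.prod volume) := by
  have hT := measurable_matVec_joint hA
  refine ⟨fun p => w p.1 * hh.mk h (matVec (A p.1) p.2), ?_, ?_⟩
  · exact ((hw.comp measurable_fst).mul
      (hh.stronglyMeasurable_mk.measurable.comp hT)).stronglyMeasurable
  · let N := toMeasurable volume {x | h x ≠ hh.mk h x}
    have hN0 : volume N = 0 := by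
      rw [measure_toMeasurable]
      exact hh.ae_eq_mk
    have hNm : MeasurableSet N := measurableSet_toMeasurable _ _
    let S : Set (EuclideanSpace ℝ (Fin n) × EuclideanSpace ℝ (Fin n)) :=
      {p | matVec (A p.1) p.2 ∈ N} ∩ {p | (A p.1).det ≠ 0}
    have hSm : MeasurableSet S := by
      refine (hT hNm).inter ?_
      exact ((measurable_det hA).comp measurable_fst) (measurableSet_singleton 0).compl
    have hS0 : (volume.prod volume) S = 0 := by
      refine Measure.measure_prod_null_of_ae_null hSm (Filter.Eventually.of_forall fun y => ?_)
      by_cases hy : (A y).det = 0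
      · have : Prod.mk y ⁻¹' S = ∅ := by
          ext x
          simp [S, hy]
        simp [this]
      · have : Prod.mk y ⁻¹' S ⊆ matVec (A y) ⁻¹' N := fun x hx => hx.1
        refine measure_mono_null this ?_
        rw [← Measure.map_apply (measurable_matVec _) hNm, map_matVec _ hy]
        simp [hN0]
    have h1 : ∀ᵐ p ∂((volume : Measure (EuclideanSpace ℝ (Fin n))).prod
        (volume : Measure (EuclideanSpace ℝ (Fin n)))), w p.1 ≠ 0 → (A p.1).det ≠ 0 :=
      Measure.quasiMeasurePreserving_fst.ae hinv
    have h2 : ∀ᵐ p ∂((volume : Measure (EuclideanSpace ℝ (Fin n))).prod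
        (volume : Measure (EuclideanSpace ℝ (Fin n)))), p ∉ S := measure_eq_zero_iff_ae_notMem.1 hS0
    filter_upwards [h1, h2] with p hp1 hp2
    by_cases hw0 : w p.1 = 0
    · simp [hw0]
    · have hd := hp1 hw0
      have hN : matVec (A p.1) p.2 ∉ N := fun hc => hp2 ⟨hc, hd⟩
      have : ¬ (h (matVec (A p.1) p.2) ≠ hh.mk h (matVec (A p.1) p.2)) := fun hc =>
        hN (subset_toMeasurable _ _ hc)
      rw [not_not.1 this]

lemma integrable_joint {A : EuclideanSpace ℝ (Fin n) → Matrix (Fin n) (Fin n) ℝ}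
    (hA : ∀ i j, Measurable fun y => A y i j)
    {w : EuclideanSpace ℝ (Fin n) → ℝ} (hw : Measurable w)
    (hinv : ∀ᵐ y : EuclideanSpace ℝ (Fin n), w y ≠ 0 → (A y).det ≠ 0)
    (hint : Integrable fun y => |(A y).det|⁻¹ * |w y|)
    {h : EuclideanSpace ℝ (Fin n) → ℝ} (hh : Integrable h)
    {φ : EuclideanSpace ℝ (Fin n) → ℝ} (hc : Continuous φ) (hs : HasCompactSupport φ) :
    Integrable (fun p : EuclideanSpace ℝ (Fin n) × EuclideanSpace ℝ (Fin n) =>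
      w p.1 * h (matVec (A p.1) p.2) * φ p.2) (volume.prod volume) := by
  obtain ⟨C, hC⟩ := hs.exists_bound_of_continuous hc
  refine Integrable.mul_bdd (c := C) ?_ (hc.comp continuous_snd).aestronglyMeasurable
    (Filter.Eventually.of_forall fun p => hC p.2)
  rw [integrable_prod_iff (aesm_joint hA hw hinv hh.1)]
  constructor
  · filter_upwards [hinv] with y hy
    by_cases hw0 : w y = 0
    · simp [hw0]
    · exact (integrable_matVec (hy hw0) hh).const_mul _
  · refine (hint.mul_const (∫ x, ‖h x‖)).congr ?_
    filter_upwards [hinv] with y hy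
    by_cases hw0 : w y = 0
    · simp [hw0]
    · simp_rw [norm_mul]
      rw [integral_const_mul, integral_matVec (h := fun x => ‖h x‖) (hy hw0) hh.1.norm,
        Real.norm_eq_abs]
      ring

lemma frobNorm_nonneg (M : Matrix (Fin n) (Fin n) ℝ) : 0 ≤ frobNorm M := Real.sqrt_nonneg _

lemma abs_le_frobNorm (M : Matrix (Fin n) (Fin n) ℝ) (i j : Fin n) : |M i j| ≤ frobNorm M := by
  refine Real.abs_le_sqrt ?_
  have h1 : (M i j) ^ 2 ≤ ∑ k, (M i k) ^ 2 :=
    Finset.single_le_sum (f := fun k => (M i k) ^ 2) (fun k _ => sq_nonneg _) (Finset.mem_univ j)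
  have h2 : ∑ k, (M i k) ^ 2 ≤ ∑ l, ∑ k, (M l k) ^ 2 :=
    Finset.single_le_sum (f := fun l => ∑ k, (M l k) ^ 2)
      (fun l _ => Finset.sum_nonneg fun k _ => sq_nonneg _) (Finset.mem_univ i)
  exact h1.trans h2

end Helpers

/-- Under the integrability condition with `k = 1`, for `f ∈ W^{1,1}(ℝⁿ)` with
weak partial derivatives `g i = ∂f/∂xᵢ`, the weak gradient of `H_{Φ,A} f` is given by
`∇(H_{Φ,A}f)(x) = ∫ Φ(y) ∇f(A(y)x) · A(y) dy`, i.e. its `j`-th component is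
`x ↦ ∫ Φ(y) (Σ_i (∂f/∂xᵢ)(A(y)x) a_{ij}(y)) dy`. -/
theorem weakGradient_hausdorffOp (n : ℕ)
    (Φ : EuclideanSpace ℝ (Fin n) → ℝ)
    (A : EuclideanSpace ℝ (Fin n) → Matrix (Fin n) (Fin n) ℝ)
    (hΦ : Measurable Φ) (hA : ∀ i j, Measurable fun y => A y i j)
    (hinv : ∀ᵐ y : EuclideanSpace ℝ (Fin n), Φ y ≠ 0 → (A y).det ≠ 0)
    (hint : Integrable
      (fun y => |(A y).det|⁻¹ * (1 + frobNorm (A y)) * |Φ y|))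
    (f : EuclideanSpace ℝ (Fin n) → ℝ)
    (g : Fin n → EuclideanSpace ℝ (Fin n) → ℝ)
    (hfL1 : Integrable f)
    (hg : ∀ i, Integrable (g i) ∧ IsWeakDeriv (Pi.single i 1) f (g i))
    (j : Fin n) :
    IsWeakDeriv (Pi.single j 1) (hausdorffOp Φ A f)
      (fun x => ∫ y, Φ y * ∑ i, g i (matVec (A y) x) * A y i j) := by
  rw [isWeakDeriv_single]
  intro φ hφ hs
  have hdet := measurable_det hA
  have hint0 : Integrable fun y => |(A y).det|⁻¹ * |Φ y| := by
    refine hint.mono ?_ (Filter.Eventually.of_forall fun y => ?_)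
    · exact (hdet.abs.inv.mul hΦ.abs).aestronglyMeasurable
    · have hF := frobNorm_nonneg (A y)
      rw [Real.norm_of_nonneg (by positivity), Real.norm_of_nonneg (by positivity)]
      refine mul_le_mul_of_nonneg_right ?_ (abs_nonneg _)
      exact le_mul_of_one_le_right (by positivity) (by linarith)
  have hint1 : ∀ i, Integrable fun y => |(A y).det|⁻¹ * |Φ y * A y i j| := by
    intro i
    refine hint.mono ?_ (Filter.Eventually.of_forall fun y => ?_)
    · exact (hdet.abs.inv.mul (hΦ.mul (hA i j)).abs).aestronglyMeasurable
    · have hF := frobNorm_nonneg (A y)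
      have hF' := abs_le_frobNorm (A y) i j
      rw [Real.norm_of_nonneg (by positivity), Real.norm_of_nonneg (by positivity), abs_mul,
        mul_comm |Φ y|, ← mul_assoc]
      refine mul_le_mul_of_nonneg_right ?_ (abs_nonneg _)
      exact mul_le_mul_of_nonneg_left (by linarith) (by positivity)
  have hJ0 := integrable_joint hA hΦ hinv hint0 hfL1 (continuous_pderiv1 hφ j)
    (hasCompactSupport_pderiv1 hs j)
  have hJ1 : Integrable (fun p : EuclideanSpace ℝ (Fin n) × EuclideanSpace ℝ (Fin n) =>
      Φ p.1 * (∑ i, g i (matVec (A p.1) p.2) * A p.1 i j) * φ p.2) (volume.prod volume) := by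
    have := integrable_finsetSum Finset.univ fun i _ =>
      integrable_joint hA (hΦ.mul (hA i j))
        (hinv.mono fun y hy h0 => hy (left_ne_zero_of_mul h0)) (hint1 i) (hg i).1
        hφ.continuous hs
    refine this.congr (Filter.Eventually.of_forall fun p => ?_)
    simp only [Finset.mul_sum, Finset.sum_mul]
    exact Finset.sum_congr rfl fun i _ => by simp only [Pi.mul_apply]; ring
  simp only [hausdorffOp]
  simp_rw [← integral_mul_const]
  have e0 := integral_integral_swap (f := fun y x => Φ y * f (matVec (A y) x) * pderiv1 j φ x) hJ0
  have e1 := integral_integral_swap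
    (f := fun y x => Φ y * (∑ i, g i (matVec (A y) x) * A y i j) * φ x) hJ1
  rw [← e0, ← e1, ← integral_neg]
  refine integral_congr_ae ?_
  filter_upwards [hinv] with y hy
  by_cases h0 : Φ y = 0
  · simp [h0]
  · simp_rw [mul_assoc (Φ y)]
    rw [integral_const_mul, integral_const_mul, weak_one_matrix (hy h0) hfL1 hg hφ hs j]
    ring

end
end

section
/- Let Φ be a nonnegative measurable function on ℝ^n and k ≥ 0 an integer with ∫_{ℝ^n} |y|^n (1 + |y|^{-k}) Φ(y) dy < ∞. Then for every f ∈ W^{k,1}(ℝ^n) and every multi-index α with |α| ≤ k, the weak derivative of H_Φ f satisfies, for a.e. x, D^α(H_Φ f)(x) = ∫_{ℝ^n} |y|^{-|α|} Φ(y) (D^α f)(x/|y|) dy. -/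
open MeasureTheory

noncomputable section

/-- The Hausdorff operator `H_Φ f(x) = ∫ Φ(y) f(x/|y|) dy`. -/
def hausdorffRad {n : ℕ} (Φ : EuclideanSpace ℝ (Fin n) → ℝ)
    (f : EuclideanSpace ℝ (Fin n) → ℝ) : EuclideanSpace ℝ (Fin n) → ℝ :=
  fun x => ∫ y, Φ y * f (‖y‖⁻¹ • x)

section helpers

variable {n : ℕ}

lemma pderiv1_scale (i : Fin n) (φ : EuclideanSpace ℝ (Fin n) → ℝ) (c r : ℝ) :
    pderiv1 i (fun x => c * φ (r • x)) = fun x => (c * r) * pderiv1 i φ (r • x) := by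
  funext x
  have h1 : (fun x => c * φ (r • x)) = c • (fun x => φ (r • x)) := by
    funext x; simp
  unfold pderiv1
  rw [h1, fderiv_const_smul_field, Pi.smul_apply, fderiv_comp_smul]
  simp [mul_assoc]

lemma pderiv1_iter_scale (i : Fin n) (m : ℕ) (φ : EuclideanSpace ℝ (Fin n) → ℝ) (c r : ℝ) :
    (pderiv1 i)^[m] (fun x => c * φ (r • x)) =
      fun x => (c * r ^ m) * (pderiv1 i)^[m] φ (r • x) := by
  induction m with
  | zero => simp
  | succ m ih =>
    rw [Function.iterate_succ_apply', ih, pderiv1_scale, Function.iterate_succ_apply']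
    simp [pow_succ, mul_assoc]

lemma fold_scale (α : Fin n → ℕ) (φ : EuclideanSpace ℝ (Fin n) → ℝ) (r : ℝ)
    (l : List (Fin n)) :
    l.foldr (fun i g => (pderiv1 i)^[α i] g) (fun x => φ (r • x)) =
      fun x => r ^ (l.map α).sum * (l.foldr (fun i g => (pderiv1 i)^[α i] g) φ) (r • x) := by
  induction l with
  | nil => simp
  | cons i l ih =>
    rw [List.foldr_cons, ih, pderiv1_iter_scale, List.foldr_cons, List.map_cons, List.sum_cons,
      pow_add, mul_comm (r ^ α i)]

lemma mderiv_scale (α : Fin n → ℕ) (φ : EuclideanSpace ℝ (Fin n) → ℝ) (r : ℝ) :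
    mderiv α (fun x => φ (r • x)) = fun x => r ^ (∑ i, α i) * mderiv α φ (r • x) := by
  unfold mderiv
  rw [fold_scale]
  have : ((List.finRange n).map α).sum = ∑ i, α i := by
    rw [← List.ofFn_eq_map, List.sum_ofFn]
  rw [this]

def IsTest (φ : EuclideanSpace ℝ (Fin n) → ℝ) : Prop :=
  ContDiff ℝ (⊤ : ℕ∞) φ ∧ HasCompactSupport φ

lemma IsTest.pderiv1 {φ : EuclideanSpace ℝ (Fin n) → ℝ} (h : IsTest φ) (i : Fin n) :
    IsTest (pderiv1 i φ) := by
  refine ⟨?_, ?_⟩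
  · exact (h.1.fderiv_right (m := ((⊤ : ℕ∞) : WithTop ℕ∞)) (by simp)).clm_apply contDiff_const
  · exact h.2.fderiv_apply ℝ _

lemma IsTest.iter {φ : EuclideanSpace ℝ (Fin n) → ℝ} (h : IsTest φ) (i : Fin n) (m : ℕ) :
    IsTest ((_root_.pderiv1 i)^[m] φ) := by
  induction m with
  | zero => simpa
  | succ m ih =>
    rw [Function.iterate_succ_apply']
    exact ih.pderiv1 i

lemma IsTest.mderiv {φ : EuclideanSpace ℝ (Fin n) → ℝ} (h : IsTest φ) (α : Fin n → ℕ) :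
    IsTest (mderiv α φ) := by
  unfold _root_.mderiv
  induction List.finRange n with
  | nil => simpa
  | cons i l ih =>
    rw [List.foldr_cons]
    exact ih.iter i _

lemma integrable_kernel (hn : n ≠ 0) (W g ψ : EuclideanSpace ℝ (Fin n) → ℝ)
    (hW : Measurable W) (hW0 : ∀ y, 0 ≤ W y) (hWi : Integrable (fun y => ‖y‖ ^ n * W y))
    (hg : Integrable g) (hψ : IsTest ψ) :
    Integrable (fun p : EuclideanSpace ℝ (Fin n) × EuclideanSpace ℝ (Fin n) =>
      W p.1 * g (‖p.1‖⁻¹ • p.2) * ψ p.2) (volume.prod volume) := by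
  have : NeZero n := ⟨hn⟩
  have hne : ∀ᵐ y : EuclideanSpace ℝ (Fin n), y ≠ 0 := Measure.ae_ne volume 0
  have hq : Measure.QuasiMeasurePreserving
      (fun p : EuclideanSpace ℝ (Fin n) × EuclideanSpace ℝ (Fin n) => ‖p.1‖⁻¹ • p.2)
      (volume.prod volume) volume := by
    refine QuasiMeasurePreserving.prod_of_right (by fun_prop) ?_
    filter_upwards [hne] with y hy
    exact Measure.quasiMeasurePreserving_smul _ (inv_ne_zero (norm_ne_zero_iff.mpr hy))
  have hm : AEStronglyMeasurable
      (fun p : EuclideanSpace ℝ (Fin n) × EuclideanSpace ℝ (Fin n) =>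
        W p.1 * g (‖p.1‖⁻¹ • p.2)) (volume.prod volume) :=
    (hW.comp measurable_fst).aestronglyMeasurable.mul
      (hg.aestronglyMeasurable.comp_quasiMeasurePreserving hq)
  have hbase : Integrable (fun p : EuclideanSpace ℝ (Fin n) × EuclideanSpace ℝ (Fin n) =>
      W p.1 * g (‖p.1‖⁻¹ • p.2)) (volume.prod volume) := by
    rw [integrable_prod_iff hm]
    constructor
    · filter_upwards [hne] with y hy
      exact (hg.comp_smul (inv_ne_zero (norm_ne_zero_iff.mpr hy))).const_mul _
    · have : (fun y : EuclideanSpace ℝ (Fin n) => ∫ x, ‖W y * g (‖y‖⁻¹ • x)‖) =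
          fun y => (‖y‖ ^ n * W y) * ∫ x, ‖g x‖ := by
        funext y
        have h := Measure.integral_comp_inv_smul_of_nonneg volume (fun x => ‖g x‖)
          (norm_nonneg y)
        simp only [norm_mul, integral_const_mul]
        rw [h, finrank_euclideanSpace_fin, Real.norm_of_nonneg (hW0 y), smul_eq_mul]
        ring
      simp only [this]
      exact hWi.mul_const _
  obtain ⟨C, hC⟩ := hψ.2.exists_bound_of_continuous hψ.1.continuous
  exact hbase.mul_bdd (c := C)
    (hψ.1.continuous.comp continuous_snd).aestronglyMeasurable
    (Filter.Eventually.of_forall fun p => hC p.2)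

lemma pow_le_one_add (t : ℝ) (ht : 0 ≤ t) {j k : ℕ} (h : j ≤ k) : t ^ j ≤ 1 + t ^ k := by
  rcases le_total t 1 with h1 | h1
  · have := pow_le_one₀ ht h1 (n := j)
    have := pow_nonneg ht k
    linarith
  · have := pow_le_pow_right₀ h1 h
    linarith

lemma swap_kernel (hn : n ≠ 0) (W g ψ : EuclideanSpace ℝ (Fin n) → ℝ)
    (hW : Measurable W) (hW0 : ∀ y, 0 ≤ W y) (hWi : Integrable (fun y => ‖y‖ ^ n * W y))
    (hg : Integrable g) (hψ : IsTest ψ) :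
    ∫ x, (∫ y, W y * g (‖y‖⁻¹ • x)) * ψ x = ∫ y, W y * ∫ x, g (‖y‖⁻¹ • x) * ψ x := by
  have h := integrable_kernel hn W g ψ hW hW0 hWi hg hψ
  have h2 := integral_integral_swap
    (f := fun y x => W y * g (‖y‖⁻¹ • x) * ψ x) h
  simp only [mul_assoc, integral_const_mul] at h2 ⊢
  rw [h2]
  refine integral_congr_ae (Filter.Eventually.of_forall fun x => ?_)
  simp only [← mul_assoc, integral_mul_const]

lemma weak_scale (α : Fin n → ℕ) (f g φ : EuclideanSpace ℝ (Fin n) → ℝ)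
    (h : IsWeakDeriv α f g) (hφ : IsTest φ) (r : ℝ) (hr : 0 < r) :
    ∫ x, f (r⁻¹ • x) * mderiv α φ x =
      (-1 : ℝ) ^ (∑ i, α i) * (r⁻¹ ^ (∑ i, α i) * ∫ x, g (r⁻¹ • x) * φ x) := by
  have hr0 := hr.ne'
  have e1 := Measure.integral_comp_inv_smul_of_nonneg volume
    (fun u => f u * mderiv α φ (r • u)) hr.le
  have e2 := Measure.integral_comp_inv_smul_of_nonneg volume
    (fun u => g u * φ (r • u)) hr.le
  simp only [smul_inv_smul₀ hr0, smul_eq_mul] at e1 e2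
  have h3 := h (fun x => φ (r • x)) (hφ.1.comp (contDiff_const_smul r))
    (hφ.2.comp_smul hr0)
  rw [mderiv_scale] at h3
  have h4 : ∀ x, f x * (r ^ (∑ i, α i) * mderiv α φ (r • x)) =
      r ^ (∑ i, α i) * (f x * mderiv α φ (r • x)) := fun x => by ring
  simp only [h4, integral_const_mul] at h3
  have h5 : ∫ x, f x * mderiv α φ (r • x) =
      r⁻¹ ^ (∑ i, α i) * ((-1 : ℝ) ^ (∑ i, α i) * ∫ x, g x * φ (r • x)) := by
    rw [← h3, ← mul_assoc, ← mul_pow, inv_mul_cancel₀ hr0, one_pow, one_mul]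
  rw [e1, e2, h5]
  ring

end helpers

/-- If `∫ |y|ⁿ (1 + |y|^{-k}) Φ(y) dy < ∞` with `Φ ≥ 0`, then for `f ∈ W^{k,1}`
with weak-derivative family `D` and any multi-index `|α| ≤ k`, the weak derivative of order `α` of
`H_Φ f` is `x ↦ ∫ |y|^{-|α|} Φ(y) (D^α f)(x/|y|) dy`. -/
theorem weakDeriv_hausdorffRad (n k : ℕ)
    (Φ : EuclideanSpace ℝ (Fin n) → ℝ)
    (hΦ : Measurable Φ) (hΦ0 : ∀ y, 0 ≤ Φ y)
    (hint : Integrable (fun y : EuclideanSpace ℝ (Fin n) =>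
      ‖y‖ ^ n * (1 + (‖y‖⁻¹) ^ k) * Φ y))
    (f : EuclideanSpace ℝ (Fin n) → ℝ)
    (D : (Fin n → ℕ) → EuclideanSpace ℝ (Fin n) → ℝ)
    (hf : HasSobolevDerivs k f D)
    (α : Fin n → ℕ) (hα : ∑ i, α i ≤ k) :
    IsWeakDeriv α (hausdorffRad Φ f)
      (fun x => ∫ y, (‖y‖⁻¹) ^ (∑ i, α i) * Φ y * D α (‖y‖⁻¹ • x)) := by
  intro φ hφ1 hφ2
  have hφ : IsTest φ := ⟨hφ1, hφ2⟩
  rcases eq_or_ne n 0 with rfl | hn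
  · have hα0 : α = 0 := Subsingleton.elim _ _
    subst hα0
    have hs : ∀ (c : ℝ) (x : EuclideanSpace ℝ (Fin 0)), c • x = x :=
      fun c x => Subsingleton.elim _ _
    rw [hf.1]
    simp [hausdorffRad, mderiv, hs]
  have : NeZero n := ⟨hn⟩
  have hne : ∀ᵐ y : EuclideanSpace ℝ (Fin n), y ≠ 0 := Measure.ae_ne volume 0
  have hWi : ∀ j ≤ k, Integrable (fun y : EuclideanSpace ℝ (Fin n) =>
      ‖y‖ ^ n * ((‖y‖⁻¹) ^ j * Φ y)) := by
    intro j hj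
    refine hint.mono' (by fun_prop) (Filter.Eventually.of_forall fun y => ?_)
    have h1 := hΦ0 y
    rw [Real.norm_of_nonneg (by positivity), mul_assoc]
    have := pow_le_one_add (‖y‖⁻¹) (by positivity) hj
    gcongr
  have hf0 : Integrable f := by
    have := (hf.2 0 (by simp)).1
    rwa [hf.1] at this
  have hD := hf.2 α hα
  unfold hausdorffRad
  rw [swap_kernel hn Φ f _ hΦ hΦ0 (by simpa using hWi 0 (Nat.zero_le _)) hf0 (hφ.mderiv α)]
  have h2 := swap_kernel hn (fun y => (‖y‖⁻¹) ^ (∑ i, α i) * Φ y) (D α) φ (by fun_prop)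
    (fun y => mul_nonneg (by positivity) (hΦ0 y)) (hWi _ hα) hD.1 hφ
  rw [h2, ← integral_const_mul]
  refine integral_congr_ae ?_
  filter_upwards [hne] with y hy
  rw [weak_scale α f (D α) φ hD.2 hφ ‖y‖ (norm_pos_iff.mpr hy)]
  ring

end
end

section
/- Let Φ be a nonnegative measurable function on ℝ^n and A(y) a measurable n×n-matrix-valued function with A(y) invertible for a.e. y in the support of Φ. If there exists a nonzero nonnegative Schwartz function f on ℝ^n such that H_{Φ,A} f ∈ L^1(ℝ^n), then ∫_{ℝ^n} |det A(y)|^{-1} Φ(y) dy < ∞. -/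
open MeasureTheory

noncomputable section

theorem matVec_eq_toLin {n : ℕ} (M : Matrix (Fin n) (Fin n) ℝ) (x : EuclideanSpace ℝ (Fin n)) :
    matVec M x = Matrix.toLin (PiLp.basisFun 2 ℝ (Fin n)) (PiLp.basisFun 2 ℝ (Fin n)) M x := by
  rw [← Matrix.toEuclideanLin_eq_toLin]
  rfl

theorem lintegral_matVec {n : ℕ} (M : Matrix (Fin n) (Fin n) ℝ) (hM : M.det ≠ 0)
    (g : EuclideanSpace ℝ (Fin n) → ENNReal) (hg : Measurable g) :
    ∫⁻ x, g (matVec M x) = ENNReal.ofReal |M.det|⁻¹ * ∫⁻ x, g x := by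
  set L := Matrix.toLin (PiLp.basisFun 2 ℝ (Fin n)) (PiLp.basisFun 2 ℝ (Fin n)) M with hL
  have hd : LinearMap.det L = M.det := by rw [hL, LinearMap.det_toLin]
  have hmap := Measure.map_linearMap_addHaar_eq_smul_addHaar
    (volume : Measure (EuclideanSpace ℝ (Fin n))) (f := L) (by rwa [hd])
  have hLm : Measurable L := L.continuous_of_finiteDimensional.measurable
  simp_rw [matVec_eq_toLin]
  rw [← hL, ← lintegral_map hg hLm, hmap, lintegral_smul_measure, hd, abs_inv, smul_eq_mul]

theorem measurable_matVec_s13 {n : ℕ} (A : EuclideanSpace ℝ (Fin n) → Matrix (Fin n) (Fin n) ℝ)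
    (hA : ∀ i j, Measurable fun y => A y i j) :
    Measurable fun p : EuclideanSpace ℝ (Fin n) × EuclideanSpace ℝ (Fin n) =>
      matVec (A p.2) p.1 := by
  have h : Measurable fun p : EuclideanSpace ℝ (Fin n) × EuclideanSpace ℝ (Fin n) =>
      (fun i => ∑ j, A p.2 i j * p.1 j) := by
    refine measurable_pi_lambda _ fun i => Finset.measurable_sum _ fun j _ => ?_
    refine ((hA i j).comp measurable_snd).mul ?_
    have : Measurable fun x : EuclideanSpace ℝ (Fin n) => x j := by fun_prop
    exact this.comp measurable_fst
  exact (MeasurableEquiv.toLp 2 (Fin n → ℝ)).measurable.comp h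

/-- For nonnegative measurable `Φ` and a matrix family `A(y)` invertible a.e. on
`supp Φ`, if there is a nonzero nonnegative Schwartz function `f` with `H_{Φ,A} f ∈ L¹(ℝⁿ)`
(i.e. the unsigned double integral `∫∫ Φ(y) f(A(y)x) dy dx` is finite), then
`∫ |det A(y)|⁻¹ Φ(y) dy < ∞`. -/
theorem integrable_det_inv_mul_of_schwartz (n : ℕ)
    (Φ : EuclideanSpace ℝ (Fin n) → ℝ)
    (A : EuclideanSpace ℝ (Fin n) → Matrix (Fin n) (Fin n) ℝ)
    (hΦ : Measurable Φ) (hΦ0 : ∀ y, 0 ≤ Φ y)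
    (hA : ∀ i j, Measurable fun y => A y i j)
    (hinv : ∀ᵐ y : EuclideanSpace ℝ (Fin n), Φ y ≠ 0 → (A y).det ≠ 0)
    (f : SchwartzMap (EuclideanSpace ℝ (Fin n)) ℝ)
    (hf0 : ∀ x, 0 ≤ f x) (hfne : f ≠ 0)
    (hL1 : ∫⁻ x, ∫⁻ y, ENNReal.ofReal (Φ y * f (matVec (A y) x)) < ⊤) :
    Integrable (fun y => |(A y).det|⁻¹ * Φ y) := by
  have hfc : Continuous f := f.continuous
  have hgm : Measurable fun x => ENNReal.ofReal (f x) := hfc.measurable.ennreal_ofReal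
  have hdet : Measurable fun y => (A y).det := by
    simp_rw [Matrix.det_apply']
    exact Finset.measurable_sum _ fun σ _ =>
      (Finset.measurable_prod _ fun i _ => hA _ _).const_mul _
  have hmeas : Measurable fun y => |(A y).det|⁻¹ * Φ y := by
    refine Measurable.mul (Measurable.inv ?_) hΦ
    exact continuous_abs.measurable.comp hdet
  have hpos : ∫⁻ x, ENNReal.ofReal (f x) ≠ 0 := by
    intro h0
    rw [lintegral_eq_zero_iff hgm] at h0
    have h1 : (f : EuclideanSpace ℝ (Fin n) → ℝ) =ᵐ[volume] fun _ => (0 : ℝ) := by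
      filter_upwards [h0] with x hx
      exact le_antisymm (ENNReal.ofReal_eq_zero.1 hx) (hf0 x)
    have h2 := Measure.eq_of_ae_eq h1 hfc continuous_const
    exact hfne (by ext x; exact congrFun h2 x)
  have hjm : Measurable fun p : EuclideanSpace ℝ (Fin n) × EuclideanSpace ℝ (Fin n) =>
      ENNReal.ofReal (Φ p.2 * f (matVec (A p.2) p.1)) :=
    ((hΦ.comp measurable_snd).mul
      (hfc.measurable.comp (measurable_matVec_s13 A hA))).ennreal_ofReal
  rw [lintegral_lintegral_swap hjm.aemeasurable] at hL1
  have hkey : ∫⁻ y, ∫⁻ x, ENNReal.ofReal (Φ y * f (matVec (A y) x)) =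
      ∫⁻ y, ENNReal.ofReal (|(A y).det|⁻¹ * Φ y) * ∫⁻ x, ENNReal.ofReal (f x) := by
    refine lintegral_congr_ae ?_
    filter_upwards [hinv] with y hy
    by_cases h : Φ y = 0
    · simp [h]
    · simp_rw [ENNReal.ofReal_mul (hΦ0 y)]
      rw [lintegral_const_mul' _ _ ENNReal.ofReal_ne_top,
        lintegral_matVec (A y) (hy h) (fun x => ENNReal.ofReal (f x)) hgm,
        ENNReal.ofReal_mul (by positivity)]
      ring
  rw [hkey, lintegral_mul_const _ hmeas.ennreal_ofReal] at hL1
  refine ⟨hmeas.aestronglyMeasurable, ?_⟩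
  rw [hasFiniteIntegral_iff_ofReal
    (Filter.Eventually.of_forall fun y => mul_nonneg (by positivity) (hΦ0 y))]
  exact ENNReal.lt_top_of_mul_ne_top_left hL1.ne hpos

end
end
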